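/- arXiv:2307.11739 — 2 statements merged into one kernel-verified Lean document; each statement's English description precedes it below -/
import Mathlib

section
/- (Aperiodicity of products of cosines with incommensurable frequencies.) Let n ≥ 1 and let a : Fin n → ℝ with a i ≠ 0 for every i. Suppose there exist indices i, j such that the ratio (a i) / (a j) is irrational. Then the function f : ℝ → ℝ given by f(t) = |∏_{k} cos(a k · t)| is not periodic: there is no T > 0 with f(t + T) = f(t) for all t ∈ ℝ. -/
open scoped BigOperators

/-- aperiodicity of products of cosines with incommensurable frequencies:
if all frequencies `a k` are nonzero and some ratio `a i / a j` is irrational, then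
`t ↦ |∏_k cos(a k · t)|` is not periodic. -/
theorem abs_prod_cos_not_periodic (n : ℕ) (hn : 1 ≤ n) (a : Fin n → ℝ)
    (ha : ∀ i, a i ≠ 0) (hirr : ∃ i j : Fin n, Irrational (a i / a j)) :
    ¬ ∃ T > (0 : ℝ), ∀ t : ℝ,
        |∏ k : Fin n, Real.cos (a k * (t + T))| =
        |∏ k : Fin n, Real.cos (a k * t)| := by
  rintro ⟨T, hT, h⟩
  obtain ⟨i, j, hij⟩ := hirr
  have h0 := h 0
  simp only [zero_add, mul_zero, Real.cos_zero, Finset.prod_const_one, abs_one] at h0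
  rw [Finset.abs_prod] at h0
  have key : ∀ k, ∃ m : ℤ, (m : ℝ) * Real.pi = a k * T := by
    intro k
    have h1 : |Real.cos (a k * T)| = 1 := by
      refine le_antisymm (Real.abs_cos_le_one _) ?_
      rw [← h0, ← Finset.mul_prod_erase Finset.univ _ (Finset.mem_univ k)]
      refine mul_le_of_le_one_right (abs_nonneg _) ?_
      exact Finset.prod_le_one (fun _ _ => abs_nonneg _) (fun _ _ => Real.abs_cos_le_one _)
    have h2 : Real.sin (a k * T) = 0 := by
      have h3 := Real.sin_sq_add_cos_sq (a k * T)
      rw [← sq_abs (Real.cos _), h1] at h3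
      have h4 : Real.sin (a k * T) ^ 2 = 0 := by linarith
      exact pow_eq_zero_iff (two_ne_zero) |>.1 h4
    exact Real.sin_eq_zero_iff.1 h2
  obtain ⟨p, hp⟩ := key i
  obtain ⟨q, hq⟩ := key j
  apply hij
  refine ⟨(p : ℚ) / q, ?_⟩
  push_cast
  rw [← mul_div_mul_right (p : ℝ) q Real.pi_ne_zero, hp, hq, mul_div_mul_right _ _ hT.ne']
end

section
/- (Computational-basis measurement on a WGS, outcome |1⟩, and local-unitary equivalence.) Let N ≥ 2, let φ : Fin N → Fin N → ℝ be symmetric with zero diagonal, fix a site k : Fin N, and let φ' i j = φ (k.succAbove i) (k.succAbove j) be the restricted weights. Then for every configuration a : Fin (N−1) → Bool of the remaining qubits, c_φ(the N-qubit configuration obtained from a by inserting the value true at position k) = 2^{−1/2} · ( ∏_{l : Fin (N−1)} exp(−i · φ (k.succAbove l) k · [a l]) ) · c_{φ'}(a). Consequently the renormalized post-measurement state for outcome true is obtained from the (N−1)-qubit weighted graph state with weights φ' by applying to each remaining qubit l the diagonal single-qubit unitary diag(1, exp(−i·φ (k.succAbove l) k)); in particular the post-measurement states for the two outcomes are related by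 a tensor product of single-qubit diagonal unitaries. -/
open scoped BigOperators

noncomputable section

/-- indicator of a Boolean value: `[b] = 1` if `b = true`, else `0`. -/
def ind (b : Bool) : ℝ := if b then 1 else 0

/-- Coefficient of the `N`-qubit weighted graph state with weights `φ`. -/
def wgsCoeff (N : ℕ) (φ : Fin N → Fin N → ℝ) (a : Fin N → Bool) : ℂ :=
  (((2 : ℝ) ^ (-(N : ℝ) / 2) : ℝ) : ℂ) *
    Complex.exp (-(Complex.I) *
      ((∑ i : Fin N, ∑ j : Fin N, if i < j then φ i j * ind (a i) * ind (a j) else 0 : ℝ) : ℂ))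

/-- computational-basis measurement on a WGS, outcome `|1⟩`, and
local-unitary equivalence: with `N = n + 1 ≥ 2` and restricted weights
`φ' i j = φ (k.succAbove i) (k.succAbove j)`, inserting the value `true` at position `k`
gives `c_φ(a with true at k) = 2^{-1/2} · (∏_l e^{-i φ(k.succAbove l) k [a l]}) · c_{φ'}(a)`;
consequently the renormalized post-measurement state for outcome `true` is obtained from
the `n`-qubit WGS with weights `φ'` by applying to each remaining qubit `l` the diagonal
single-qubit unitary `diag(1, e^{-i φ (k.succAbove l) k})`, i.e. the coefficient at `a`
picks up the phase `∏_l e^{-i φ (k.succAbove l) k [a l]}`. -/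
theorem wgs_measure_one_outcome (n : ℕ) (hn : 1 ≤ n)
    (φ : Fin (n + 1) → Fin (n + 1) → ℝ)
    (hsymm : ∀ i j, φ i j = φ j i) (hdiag : ∀ i, φ i i = 0) (k : Fin (n + 1)) :
    (∀ a : Fin n → Bool,
      wgsCoeff (n + 1) φ (k.insertNth true a) =
        (((2 : ℝ) ^ (-(1 : ℝ) / 2) : ℝ) : ℂ) *
          (∏ l : Fin n,
            Complex.exp (-(Complex.I) * ((φ (k.succAbove l) k * ind (a l) : ℝ) : ℂ))) *
          wgsCoeff n (fun i j => φ (k.succAbove i) (k.succAbove j)) a) ∧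
    (∀ a : Fin n → Bool,
      wgsCoeff (n + 1) φ (k.insertNth true a) / ((Real.sqrt (1 / 2) : ℝ) : ℂ) =
        (∏ l : Fin n,
            Complex.exp (-(Complex.I) * ((φ (k.succAbove l) k * ind (a l) : ℝ) : ℂ))) *
          wgsCoeff n (fun i j => φ (k.succAbove i) (k.succAbove j)) a) := by
  have key : ∀ a : Fin n → Bool,
      (∑ i : Fin (n+1), ∑ j : Fin (n+1), if i < j then
        φ i j * ind ((k.insertNth true a : Fin (n+1) → Bool) i)
          * ind ((k.insertNth true a : Fin (n+1) → Bool) j) else 0 : ℝ) =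
      (∑ l : Fin n, φ (k.succAbove l) k * ind (a l)) +
      ∑ i : Fin n, ∑ j : Fin n, if i < j then
        φ (k.succAbove i) (k.succAbove j) * ind (a i) * ind (a j) else 0 := by
    intro a
    have h1 : ind true = 1 := by simp [ind]
    simp only [Fin.sum_univ_succAbove _ k, Fin.insertNth_apply_same,
      Fin.insertNth_apply_succAbove, lt_irrefl, if_false, zero_add, h1,
      Finset.sum_add_distrib, mul_one, Fin.succAbove_lt_succAbove_iff]
    rw [← add_assoc, ← Finset.sum_add_distrib]
    congr 1
    refine Finset.sum_congr rfl fun l _ => ?_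
    rcases lt_or_gt_of_ne (Fin.succAbove_ne k l) with h | h
    · simp [h, not_lt_of_gt h]
    · simp [h, not_lt_of_gt h, hsymm k]
  have main : ∀ a : Fin n → Bool,
      wgsCoeff (n + 1) φ (k.insertNth true a) =
        (((2 : ℝ) ^ (-(1 : ℝ) / 2) : ℝ) : ℂ) *
          (∏ l : Fin n,
            Complex.exp (-(Complex.I) * ((φ (k.succAbove l) k * ind (a l) : ℝ) : ℂ))) *
          wgsCoeff n (fun i j => φ (k.succAbove i) (k.succAbove j)) a := by
    intro a
    have hp : (2 : ℝ) ^ (-((n + 1 : ℕ) : ℝ) / 2)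
        = (2 : ℝ) ^ (-(1 : ℝ) / 2) * (2 : ℝ) ^ (-(n : ℝ) / 2) := by
      rw [← Real.rpow_add (by norm_num)]
      congr 1
      push_cast
      ring
    unfold wgsCoeff
    rw [key a, hp, ← Complex.exp_sum, ← Finset.mul_sum, ← Complex.ofReal_sum,
      Complex.ofReal_add, mul_add, Complex.exp_add, Complex.ofReal_mul]
    ring
  have hs : Real.sqrt (1 / 2) = (2 : ℝ) ^ (-(1 : ℝ) / 2) := by
    rw [Real.sqrt_eq_rpow, one_div, Real.inv_rpow (by norm_num),
      ← Real.rpow_neg (by norm_num)]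
    norm_num
  refine ⟨main, fun a => ?_⟩
  have hne : (((2 : ℝ) ^ (-(1 : ℝ) / 2) : ℝ) : ℂ) ≠ 0 :=
    Complex.ofReal_ne_zero.mpr (Real.rpow_pos_of_pos (by norm_num) _).ne'
  rw [main a, hs, mul_assoc, mul_div_cancel_left₀ _ hne]

end
end
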